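/- Let L : ℝ^n × ℝ^m → ℝ be C¹ and strictly convex-concave, and suppose its set of saddle points Solution(L) is nonempty. Then every C¹ solution (x(t),y(t)) of the continuous gradient descent ascent dynamics ẋ(t) = −∇_x L(x(t),y(t)), ẏ(t) = ∇_y L(x(t),y(t)) defined for all t ≥ 0 converges, as t → ∞, to a point of Solution(L). -/

import Mathlib

/-!
The squared distance of a trajectory to a saddle point `(p, q)` has derivative at most
`-2 (L(x, q) - L(p, y)) ≤ 0`. Hence trajectories are bounded, and the distance converges, which
forces `L(x, q) = L(p, q) = L(p, y)` at every cluster point `(x, y)`. If `p` is the only minimizer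
of `L(·, q)`, then the first component of the trajectory converges to `p`; a convergent component
has zero velocity at every cluster point, so `∇ₓ L = 0` there and every cluster point is itself a
saddle point. The case of a unique maximizer `q` is dual. Finally, the distance to a saddle point
which is also a cluster point decreases to zero.
-/

open Filter Function Set Topology
open scoped Gradient InnerProductSpace

section Convexity

theorem add_le_of_convexOn_of_hasFDerivWithinAt {E : Type*} [NormedAddCommGroup E]
    [NormedSpace ℝ E] {s : Set E} {f : E → ℝ} {f' : E →L[ℝ] ℝ} {a b : E} (hf : ConvexOn ℝ s f)
    (ha : a ∈ s) (hb : b ∈ s) (hf' : HasFDerivWithinAt f f' s a) : f a + f' (b - a) ≤ f b := by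
  let line : ℝ →ᵃ[ℝ] E := AffineMap.lineMap a b
  have h0 : line 0 = a := AffineMap.lineMap_apply_zero a b
  have h1 : line 1 = b := AffineMap.lineMap_apply_one a b
  have hderiv : HasDerivWithinAt (f ∘ line) (f' (b - a)) (line ⁻¹' s) 0 :=
    HasFDerivWithinAt.comp_hasDerivWithinAt (t := s) 0 (by rwa [h0])
      AffineMap.hasDerivWithinAt_lineMap (mapsTo_preimage _ _)
  have hslope := (hf.comp_affineMap line).le_slope_of_hasDerivWithinAt
    (by rwa [mem_preimage, h0]) (by rwa [mem_preimage, h1]) one_pos hderiv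
  rw [slope_def_field, comp_apply, comp_apply, h0, h1, sub_zero, div_one] at hslope
  linarith

section StrictConvexity

variable {𝕜 E β : Type*} [Field 𝕜] [LinearOrder 𝕜] [IsStrictOrderedRing 𝕜] [AddCommGroup E]
  [Module 𝕜 E] [AddCommGroup β] [LinearOrder β] [IsOrderedAddMonoid β] [Module 𝕜 β]
  [PosSMulStrictMono 𝕜 β] {s : Set E} {f : E → β} {a b : E}

theorem lt_of_strictConvexOn_of_isMinOn (hf : StrictConvexOn 𝕜 s f) (hmin : IsMinOn f s a)
    (ha : a ∈ s) (hb : b ∈ s) (hba : b ≠ a) : f a < f b :=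
  (hmin hb).lt_of_ne fun hab =>
    hba (hf.eq_of_isMinOn (fun _ hc => hab.symm.trans_le (hmin hc)) hmin hb ha)

theorem lt_of_strictConcaveOn_of_isMaxOn (hf : StrictConcaveOn 𝕜 s f) (hmax : IsMaxOn f s a)
    (ha : a ∈ s) (hb : b ∈ s) (hba : b ≠ a) : f b < f a :=
  (hmax hb).lt_of_ne fun hab =>
    hba (hf.eq_of_isMaxOn (fun _ hc => (hmax hc).trans_eq hab.symm) hmax hb ha)

end StrictConvexity

variable {E : Type*} [NormedAddCommGroup E] [InnerProductSpace ℝ E] [CompleteSpace E]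
  {f : E → ℝ} {a : E}

theorem add_inner_gradient_le_of_convexOn (hf : ConvexOn ℝ univ f)
    (ha : DifferentiableAt ℝ f a) (b : E) : f a + ⟪∇ f a, b - a⟫_ℝ ≤ f b := by
  rw [inner_gradient_left]
  exact add_le_of_convexOn_of_hasFDerivWithinAt hf (mem_univ a) (mem_univ b)
    ha.hasFDerivAt.hasFDerivWithinAt

theorem le_add_inner_gradient_of_concaveOn (hf : ConcaveOn ℝ univ f)
    (ha : DifferentiableAt ℝ f a) (b : E) : f b ≤ f a + ⟪∇ f a, b - a⟫_ℝ := by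
  have h := add_le_of_convexOn_of_hasFDerivWithinAt hf.neg (mem_univ a) (mem_univ b)
    ha.hasFDerivAt.neg.hasFDerivWithinAt
  simp only [Pi.neg_apply, neg_apply] at h
  rw [inner_gradient_left]
  linarith

end Convexity

section ClusterPoints

theorem tendsto_comp_of_forall_mapClusterPt {ι X Y : Type*} [TopologicalSpace X]
    [TopologicalSpace Y] {l : Filter ι} {K : Set X} {u : ι → X} {φ : X → Y} {c : Y}
    (hK : IsCompact K) (hu : ∀ᶠ i in l, u i ∈ K) (hφ : Continuous φ)
    (hc : ∀ w, MapClusterPt w l u → φ w = c) : Tendsto (φ ∘ u) l (𝓝 c) := by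
  rw [tendsto_iff_ultrafilter]
  intro U hU
  obtain ⟨w, -, hw⟩ := hK.ultrafilter_le_nhds (U.map u) (le_principal_iff.2 (hU hu))
  rw [← hc w (mapClusterPt_iff_ultrafilter.2 ⟨U, hU, hw⟩)]
  exact (hφ.tendsto w).comp hw

theorem tendsto_of_antitoneOn_dist_of_mapClusterPt {ι X : Type*} [Nonempty ι] [SemilatticeSup ι]
    [PseudoMetricSpace X] {u : ι → X} {w : X} {a : ι}
    (hanti : AntitoneOn (fun i => dist (u i) w) (Ici a)) (hw : MapClusterPt w atTop u) :
    Tendsto u atTop (𝓝 w) := by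
  rw [Metric.tendsto_atTop]
  intro ε hε
  obtain ⟨i, hi, hai⟩ := ((hw.frequently (Metric.ball_mem_nhds w hε)).and_eventually
    (eventually_ge_atTop a)).exists
  exact ⟨i, fun j hij => (hanti hai (hai.trans hij) hij).trans_lt hi⟩

theorem exists_tendsto_atTop_of_antitoneOn_Ici {ι α : Type*} [Lattice ι]
    [ConditionallyCompleteLattice α] [TopologicalSpace α] [InfConvergenceClass α]
    {f : ι → α} {a : ι} (hf : AntitoneOn f (Ici a)) (hbdd : BddBelow (range f)) :
    ∃ l, Tendsto f atTop (𝓝 l) := by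
  have hanti : Antitone fun i => f (i ⊔ a) := fun i j hij =>
    hf (mem_Ici.2 le_sup_right) (mem_Ici.2 le_sup_right) (sup_le_sup_right hij a)
  refine ⟨_, (tendsto_atTop_ciInf hanti (hbdd.mono (range_comp_subset_range _ f))).congr' ?_⟩
  filter_upwards [eventually_ge_atTop a] with i hi
  rw [sup_eq_left.2 hi]

-- Near `w` the trajectory lingers for a uniform time `δ`, so a positive value of `G` at `w` would
-- make `f` drop by a fixed amount infinitely often.
theorem nonpos_of_mapClusterPt_of_deriv_le_neg {X : Type*} [PseudoMetricSpace X] {z : ℝ → X}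
    {f f' : ℝ → ℝ} {G : X → ℝ} {a l : ℝ} {w : X} (hz : UniformContinuousOn z (Ici a))
    (hf : ∀ t ∈ Ici a, HasDerivWithinAt f (f' t) (Ici a) t) (hfG : ∀ t ∈ Ici a, f' t ≤ -G (z t))
    (hl : Tendsto f atTop (𝓝 l)) (hG : LowerSemicontinuousAt G w)
    (hw : MapClusterPt w atTop z) : G w ≤ 0 := by
  by_contra! hpos
  obtain ⟨c, hc, hcG⟩ := exists_between hpos
  obtain ⟨r, hr, hball⟩ := Metric.eventually_nhds_iff.1 (hG c hcG)
  obtain ⟨δ, hδ, hzδ⟩ := Metric.uniformContinuousOn_iff_le.1 hz (r / 2) (half_pos hr)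
  have hdrop : ∃ᶠ t in atTop, f (t + δ) - f t < -(c * δ) := by
    refine ((hw.frequently (Metric.ball_mem_nhds w (half_pos hr))).and_eventually
      (eventually_ge_atTop a)).mono ?_
    rintro t ⟨htw, hat : a ≤ t⟩
    obtain ⟨s, hs, hslope⟩ := exists_hasDerivAt_eq_slope f f' (lt_add_of_pos_right t hδ)
      (fun s hs => (hf s (hat.trans hs.1)).continuousWithinAt.mono fun u hu => hat.trans hu.1)
      (fun s hs => (hf s (hat.trans hs.1.le)).hasDerivAt (Ici_mem_nhds (hat.trans_lt hs.1)))
    have has : a ≤ s := hat.trans hs.1.le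
    have hst : dist (z s) (z t) ≤ r / 2 := hzδ s has t hat <| by
      rw [Real.dist_eq, abs_of_pos (sub_pos.2 hs.1)]
      linarith [hs.2]
    have hcs : c < G (z s) := hball <| by
      linarith [dist_triangle (z s) (z t) w, Metric.mem_ball.1 htw]
    rw [add_sub_cancel_left, eq_div_iff hδ.ne'] at hslope
    rw [← hslope, ← neg_mul]
    exact mul_lt_mul_of_pos_right (by linarith [hfG s has]) hδ
  have hflat : Tendsto (fun t => f (t + δ) - f t) atTop (𝓝 0) := by
    simpa only [sub_self, comp_def, id] using
      (hl.comp (tendsto_atTop_add_const_right _ δ tendsto_id)).sub hl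
  have hlate := hflat.eventually_const_lt (neg_lt_zero.2 (mul_pos hc hδ))
  obtain ⟨t, hlt, hgt⟩ := (hdrop.and_eventually hlate).exists
  exact lt_asymm hlt hgt

theorem eq_zero_of_mapClusterPt_of_tendsto {X E : Type*} [PseudoMetricSpace X]
    [NormedAddCommGroup E] [NormedSpace ℝ E] {z : ℝ → X} {u : ℝ → E} {ψ : X → E} {a : ℝ} {c : E}
    {w : X} (hz : UniformContinuousOn z (Ici a))
    (hu : ∀ t ∈ Ici a, HasDerivWithinAt u (ψ (z t)) (Ici a) t) (hc : Tendsto u atTop (𝓝 c))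
    (hψ : ContinuousAt ψ w) (hw : MapClusterPt w atTop z) : ψ w = 0 := by
  obtain ⟨g, -, hg⟩ := exists_dual_vector'' ℝ (ψ w)
  have hgu (t : ℝ) (ht : t ∈ Ici a) :
      HasDerivWithinAt (fun s => -g (u s)) (-g (ψ (z t))) (Ici a) t :=
    (g.hasFDerivAt.comp_hasDerivWithinAt t (hu t ht)).neg
  have hle : g (ψ w) ≤ 0 := nonpos_of_mapClusterPt_of_deriv_le_neg (G := g ∘ ψ) hz hgu
    (fun _ _ => le_rfl) ((g.continuous.tendsto c).comp hc).neg
    (g.continuous.continuousAt.comp hψ).lowerSemicontinuousAt hw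
  exact norm_le_zero_iff.1 (hg.symm.trans_le hle)

end ClusterPoints

section IntegralCurves

theorem uniformContinuousOn_of_isIntegralCurveOn {E : Type*} [NormedAddCommGroup E]
    [NormedSpace ℝ E] {v : E → E} {z : ℝ → E} {s : Set ℝ} {K : Set E}
    (hz : IsIntegralCurveOn z (fun _ => v) s) (hs : Convex ℝ s) (hv : ContinuousOn v K)
    (hK : IsCompact K) (hzK : MapsTo z s K) : UniformContinuousOn z s := by
  obtain ⟨C, hC⟩ := hK.exists_bound_of_continuousOn hv
  refine (hs.lipschitzOnWith_of_nnnorm_hasDerivWithin_le (C := C.toNNReal) hz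
    fun t ht => ?_).uniformContinuousOn
  exact NNReal.coe_le_coe.1 ((hC _ (hzK ht)).trans (Real.le_coe_toNNReal C))

theorem map_eq_zero_of_mapClusterPt_of_isIntegralCurveOn {E F : Type*} [NormedAddCommGroup E]
    [NormedSpace ℝ E] [NormedAddCommGroup F] [NormedSpace ℝ F] {v : E → E} {z : ℝ → E} {a : ℝ}
    {K : Set E} {c : F} {w : E} (φ : E →L[ℝ] F) (hz : IsIntegralCurveOn z (fun _ => v) (Ici a))
    (hv : Continuous v) (hK : IsCompact K) (hzK : MapsTo z (Ici a) K)
    (hφ : ∀ u, MapClusterPt u atTop z → φ u = c) (hw : MapClusterPt w atTop z) : φ (v w) = 0 :=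
  have htendsto : Tendsto (φ ∘ z) atTop (𝓝 c) :=
    tendsto_comp_of_forall_mapClusterPt hK ((eventually_ge_atTop a).mono hzK) φ.continuous hφ
  eq_zero_of_mapClusterPt_of_tendsto (ψ := φ ∘ v)
    (uniformContinuousOn_of_isIntegralCurveOn hz (convex_Ici a) hv.continuousOn hK hzK)
    (fun t ht => φ.hasFDerivAt.comp_hasDerivWithinAt t (hz t ht)) htendsto
    (φ.continuous.comp hv).continuousAt hw

variable {H : Type*} [NormedAddCommGroup H] [InnerProductSpace ℝ H] {v : H → H} {z : ℝ → H}
  {a : ℝ} {w₀ : H}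

theorem hasDerivWithinAt_dist_sq_of_isIntegralCurveOn {s : Set ℝ} {t : ℝ}
    (hz : IsIntegralCurveOn z (fun _ => v) s) (ht : t ∈ s) (w₀ : H) :
    HasDerivWithinAt (fun t => dist (z t) w₀ ^ 2) (2 * ⟪v (z t), z t - w₀⟫_ℝ) s t := by
  simp only [dist_eq_norm, real_inner_comm (z t - w₀)]
  exact ((hz t ht).sub_const w₀).norm_sq

theorem antitoneOn_dist_of_isIntegralCurveOn {s : Set ℝ}
    (hz : IsIntegralCurveOn z (fun _ => v) s) (hs : Convex ℝ s)
    (hv : ∀ w, ⟪v w, w - w₀⟫_ℝ ≤ 0) : AntitoneOn (fun t => dist (z t) w₀) s := by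
  have hsq : AntitoneOn (fun t => dist (z t) w₀ ^ 2) s := by
    have hderiv {t : ℝ} (ht : t ∈ s) := hasDerivWithinAt_dist_sq_of_isIntegralCurveOn hz ht w₀
    refine antitoneOn_of_hasDerivWithinAt_nonpos hs
      (fun t ht => (hderiv ht).continuousWithinAt)
      (fun t ht => (hderiv (interior_subset ht)).mono interior_subset) fun t _ => ?_
    linarith [hv (z t)]
  exact fun t ht t' ht' htt' =>
    (pow_le_pow_iff_left₀ dist_nonneg dist_nonneg two_ne_zero).1 (hsq ht ht' htt')

theorem mapsTo_closedBall_of_isIntegralCurveOn (hz : IsIntegralCurveOn z (fun _ => v) (Ici a))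
    (hv : ∀ w, ⟪v w, w - w₀⟫_ℝ ≤ 0) :
    MapsTo z (Ici a) (Metric.closedBall w₀ (dist (z a) w₀)) := fun _ ht =>
  antitoneOn_dist_of_isIntegralCurveOn hz (convex_Ici a) hv self_mem_Ici ht ht

theorem inner_nonneg_of_mapClusterPt [ProperSpace H]
    (hz : IsIntegralCurveOn z (fun _ => v) (Ici a)) (hvc : Continuous v)
    (hv : ∀ w, ⟪v w, w - w₀⟫_ℝ ≤ 0) {w : H} (hw : MapClusterPt w atTop z) :
    0 ≤ ⟪v w, w - w₀⟫_ℝ := by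
  obtain ⟨l, hl⟩ := exists_tendsto_atTop_of_antitoneOn_Ici
    (antitoneOn_dist_of_isIntegralCurveOn hz (convex_Ici a) hv)
    ⟨0, forall_mem_range.2 fun _ => dist_nonneg⟩
  have hcont : Continuous fun u => -(2 * ⟪v u, u - w₀⟫_ℝ) := by fun_prop
  have hle := nonpos_of_mapClusterPt_of_deriv_le_neg (G := fun u => -(2 * ⟪v u, u - w₀⟫_ℝ))
    (uniformContinuousOn_of_isIntegralCurveOn hz (convex_Ici a) hvc.continuousOn
      (isCompact_closedBall _ _) (mapsTo_closedBall_of_isIntegralCurveOn hz hv))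
    (fun t ht => hasDerivWithinAt_dist_sq_of_isIntegralCurveOn hz ht w₀)
    (fun t _ => (neg_neg _).ge) (hl.pow 2) hcont.continuousAt.lowerSemicontinuousAt hw
  linarith

end IntegralCurves

section GradientDescentAscent

theorem isSaddlePointOn_univ_iff {α β γ : Type*} [Preorder γ] {f : α → β → γ} {a : α} {b : β} :
    IsSaddlePointOn univ univ f a b ↔ ∀ x y, f a y ≤ f a b ∧ f a b ≤ f x b :=
  ⟨fun h x y => ⟨h a (mem_univ a) y (mem_univ y), h x (mem_univ x) b (mem_univ b)⟩,
    fun h x _ y _ => (h x y).1.trans (h x y).2⟩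

variable {E F : Type*} [NormedAddCommGroup E] [InnerProductSpace ℝ E]
  [NormedAddCommGroup F] [InnerProductSpace ℝ F] {L : E × F → ℝ}

theorem continuous_gradient_left [CompleteSpace E] (hL : ContDiff ℝ 1 L) :
    Continuous fun w : E × F => ∇ (fun x => L (x, w.2)) w.1 := by
  have hslice (w : E × F) : fderiv ℝ (fun x => L (x, w.2)) w.1 = fderiv ℝ L w ∘L .inl ℝ E F :=
    ((hL.differentiable one_ne_zero w).hasFDerivAt.comp w.1
      (hasFDerivAt_prodMk_left w.1 w.2)).fderiv
  simp only [gradient, hslice]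
  exact (LinearIsometryEquiv.continuous _).comp
    ((hL.continuous_fderiv one_ne_zero).clm_comp continuous_const)

theorem continuous_gradient_right [CompleteSpace F] (hL : ContDiff ℝ 1 L) :
    Continuous fun w : E × F => ∇ (fun y => L (w.1, y)) w.2 :=
  (continuous_gradient_left (hL.comp (contDiff_snd.prodMk contDiff_fst))).comp continuous_swap

section GDAField

variable [CompleteSpace E] [CompleteSpace F]

/-- The vector field `(-∇ₓ L, ∇_y L)` of gradient descent ascent. It lives on the `ℓ²` product, so
that the squared distance to a saddle point is a Lyapunov function. -/
noncomputable def gdaField (L : E × F → ℝ) (w : WithLp 2 (E × F)) : WithLp 2 (E × F) :=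
  WithLp.toLp 2 (-∇ (fun x => L (x, w.snd)) w.fst, ∇ (fun y => L (w.fst, y)) w.snd)

theorem continuous_gdaField (hL : ContDiff ℝ 1 L) : Continuous (gdaField L) := by
  have hofLp := WithLp.prod_continuous_ofLp 2 E F
  exact (WithLp.prod_continuous_toLp 2 E F).comp
    (((continuous_gradient_left hL).comp hofLp).neg.prodMk
      ((continuous_gradient_right hL).comp hofLp))

theorem isIntegralCurveOn_gdaField {x : ℝ → E} {y : ℝ → F} {s : Set ℝ}
    (hx : ∀ t ∈ s, HasDerivWithinAt x (-∇ (fun x' => L (x', y t)) (x t)) s t)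
    (hy : ∀ t ∈ s, HasDerivWithinAt y (∇ (fun y' => L (x t, y')) (y t)) s t) :
    IsIntegralCurveOn (fun t => WithLp.toLp 2 (x t, y t)) (fun _ => gdaField L) s := fun t ht =>
  (WithLp.prodContinuousLinearEquiv 2 ℝ E F).symm.hasFDerivAt.comp_hasDerivWithinAt t
    ((hx t ht).prodMk (hy t ht))

theorem inner_gdaField_sub_le (hL : Differentiable ℝ L)
    (hconv : ∀ y, ConvexOn ℝ univ fun x => L (x, y))
    (hconc : ∀ x, ConcaveOn ℝ univ fun y => L (x, y)) (w w' : WithLp 2 (E × F)) :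
    ⟪gdaField L w, w - w'⟫_ℝ ≤ L (w'.fst, w.snd) - L (w.fst, w'.snd) := by
  have hleft := add_inner_gradient_le_of_convexOn (hconv w.snd)
    (by fun_prop : DifferentiableAt ℝ (fun x => L (x, w.snd)) w.fst) w'.fst
  have hright := le_add_inner_gradient_of_concaveOn (hconc w.fst)
    (by fun_prop : DifferentiableAt ℝ (fun y => L (w.fst, y)) w.snd) w'.snd
  have hinner : ⟪gdaField L w, w - w'⟫_ℝ = ⟪∇ (fun x => L (x, w.snd)) w.fst, w'.fst - w.fst⟫_ℝ -
      ⟪∇ (fun y => L (w.fst, y)) w.snd, w'.snd - w.snd⟫_ℝ := by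
    rw [← neg_sub w.fst, ← neg_sub w.snd, inner_neg_right, inner_neg_right, sub_neg_eq_add,
      ← inner_neg_left]
    exact WithLp.prod_inner_apply _ _
  linarith

theorem inner_gdaField_sub_nonpos (hL : Differentiable ℝ L)
    (hconv : ∀ y, ConvexOn ℝ univ fun x => L (x, y))
    (hconc : ∀ x, ConcaveOn ℝ univ fun y => L (x, y)) {p : E} {q : F}
    (hpq : IsSaddlePointOn univ univ (curry L) p q) (w : WithLp 2 (E × F)) :
    ⟪gdaField L w, w - WithLp.toLp 2 (p, q)⟫_ℝ ≤ 0 :=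
  (inner_gdaField_sub_le hL hconv hconc w _).trans
    (sub_nonpos.2 (hpq w.fst (mem_univ _) w.snd (mem_univ _)))

theorem mapsTo_closedBall_of_isSaddlePointOn (hL : Differentiable ℝ L)
    (hconv : ∀ y, ConvexOn ℝ univ fun x => L (x, y))
    (hconc : ∀ x, ConcaveOn ℝ univ fun y => L (x, y)) {z : ℝ → WithLp 2 (E × F)} {a : ℝ}
    (hz : IsIntegralCurveOn z (fun _ => gdaField L) (Ici a)) {p : E} {q : F}
    (hpq : IsSaddlePointOn univ univ (curry L) p q) :
    MapsTo z (Ici a) (Metric.closedBall (.toLp 2 (p, q)) (dist (z a) (.toLp 2 (p, q)))) :=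
  mapsTo_closedBall_of_isIntegralCurveOn hz (inner_gdaField_sub_nonpos hL hconv hconc hpq)

theorem tendsto_of_isSaddlePointOn_of_mapClusterPt (hL : Differentiable ℝ L)
    (hconv : ∀ y, ConvexOn ℝ univ fun x => L (x, y))
    (hconc : ∀ x, ConcaveOn ℝ univ fun y => L (x, y)) {z : ℝ → WithLp 2 (E × F)} {a : ℝ}
    (hz : IsIntegralCurveOn z (fun _ => gdaField L) (Ici a)) {w : WithLp 2 (E × F)}
    (hsaddle : IsSaddlePointOn univ univ (curry L) w.fst w.snd) (hw : MapClusterPt w atTop z) :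
    Tendsto z atTop (𝓝 w) :=
  tendsto_of_antitoneOn_dist_of_mapClusterPt (antitoneOn_dist_of_isIntegralCurveOn hz
    (convex_Ici a) (inner_gdaField_sub_nonpos hL hconv hconc hsaddle)) hw

end GDAField

section GDATrajectory

variable [FiniteDimensional ℝ E] [FiniteDimensional ℝ F] {z : ℝ → WithLp 2 (E × F)} {a : ℝ}
  {p : E} {q : F} (hL : ContDiff ℝ 1 L) (hconv : ∀ y, ConvexOn ℝ univ fun x => L (x, y))
  (hconc : ∀ x, ConcaveOn ℝ univ fun y => L (x, y))
  (hz : IsIntegralCurveOn z (fun _ => gdaField L) (Ici a))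
  (hpq : IsSaddlePointOn univ univ (curry L) p q)
include hL hconv hconc hz hpq

theorem value_eq_of_mapClusterPt {w : WithLp 2 (E × F)} (hw : MapClusterPt w atTop z) :
    L (w.fst, q) = L (p, q) ∧ L (p, w.snd) = L (p, q) := by
  have hLd := hL.differentiable one_ne_zero
  have hnonneg := inner_nonneg_of_mapClusterPt hz (continuous_gdaField hL)
    (inner_gdaField_sub_nonpos hLd hconv hconc hpq) hw
  have hgap : L (w.fst, q) ≤ L (p, w.snd) :=
    sub_nonneg.1 (hnonneg.trans (inner_gdaField_sub_le hLd hconv hconc w _))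
  obtain ⟨hmax, hmin⟩ := isSaddlePointOn_univ_iff.1 hpq w.fst w.snd
  exact ⟨(hgap.trans hmax).antisymm hmin, hmax.antisymm (hmin.trans hgap)⟩

theorem isSaddlePointOn_of_mapClusterPt_of_unique_min (hp : ∀ x ≠ p, L (p, q) < L (x, q))
    {w : WithLp 2 (E × F)} (hw : MapClusterPt w atTop z) :
    IsSaddlePointOn univ univ (curry L) w.fst w.snd := by
  have hfst {u : WithLp 2 (E × F)} (hu : MapClusterPt u atTop z) : u.fst = p := by
    by_contra hne
    exact (hp u.fst hne).ne' (value_eq_of_mapClusterPt hL hconv hconc hz hpq hu).1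
  have hvelocity : (gdaField L w).fst = 0 :=
    map_eq_zero_of_mapClusterPt_of_isIntegralCurveOn (WithLp.fstL 2 ℝ E F) hz
      (continuous_gdaField hL) (isCompact_closedBall _ _)
      (mapsTo_closedBall_of_isSaddlePointOn (hL.differentiable one_ne_zero) hconv hconc hz hpq)
      (fun _ => hfst) hw
  have hgrad : ∇ (fun x => L (x, w.snd)) w.fst = 0 := neg_eq_zero.1 hvelocity
  rintro x - y -
  calc L (w.fst, y) = L (p, y) := by rw [hfst hw]
    _ ≤ L (p, q) := (isSaddlePointOn_univ_iff.1 hpq x y).1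
    _ = L (w.fst, w.snd) := by
      rw [hfst hw, (value_eq_of_mapClusterPt hL hconv hconc hz hpq hw).2]
    _ ≤ L (x, w.snd) := by
      have hle := add_inner_gradient_le_of_convexOn (hconv w.snd)
        ((hL.differentiable one_ne_zero).comp (by fun_prop) w.fst) x
      rwa [hgrad, inner_zero_left, add_zero] at hle

theorem isSaddlePointOn_of_mapClusterPt_of_unique_max (hq : ∀ y ≠ q, L (p, y) < L (p, q))
    {w : WithLp 2 (E × F)} (hw : MapClusterPt w atTop z) :
    IsSaddlePointOn univ univ (curry L) w.fst w.snd := by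
  have hsnd {u : WithLp 2 (E × F)} (hu : MapClusterPt u atTop z) : u.snd = q := by
    by_contra hne
    exact (hq u.snd hne).ne (value_eq_of_mapClusterPt hL hconv hconc hz hpq hu).2
  have hgrad : ∇ (fun y => L (w.fst, y)) w.snd = 0 :=
    map_eq_zero_of_mapClusterPt_of_isIntegralCurveOn (WithLp.sndL 2 ℝ E F) hz
      (continuous_gdaField hL) (isCompact_closedBall _ _)
      (mapsTo_closedBall_of_isSaddlePointOn (hL.differentiable one_ne_zero) hconv hconc hz hpq)
      (fun _ => hsnd) hw
  rintro x - y -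
  calc L (w.fst, y) ≤ L (w.fst, w.snd) := by
        have hle := le_add_inner_gradient_of_concaveOn (hconc w.fst)
          ((hL.differentiable one_ne_zero).comp (by fun_prop) w.snd) y
        rwa [hgrad, inner_zero_left, add_zero] at hle
    _ = L (p, q) := by
      rw [hsnd hw, (value_eq_of_mapClusterPt hL hconv hconc hz hpq hw).1]
    _ ≤ L (x, q) := (isSaddlePointOn_univ_iff.1 hpq x y).2
    _ = L (x, w.snd) := by rw [hsnd hw]

end GDATrajectory

end GradientDescentAscent

theorem strict_convex_concave_gda_converges_general
    {E F : Type*} [NormedAddCommGroup E] [InnerProductSpace ℝ E] [FiniteDimensional ℝ E]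
    [NormedAddCommGroup F] [InnerProductSpace ℝ F] [FiniteDimensional ℝ F]
    {L : E × F → ℝ} (hL : ContDiff ℝ 1 L)
    (hconv : ∀ y, ConvexOn ℝ univ fun x => L (x, y))
    (hconc : ∀ x, ConcaveOn ℝ univ fun y => L (x, y))
    (hsol : ∃ p q, (∀ x y, L (p, y) ≤ L (p, q) ∧ L (p, q) ≤ L (x, q)) ∧
      ((∀ x ≠ p, L (p, q) < L (x, q)) ∨ ∀ y ≠ q, L (p, y) < L (p, q)))
    {x : ℝ → E} {y : ℝ → F} {a : ℝ}
    (hx : ∀ t ∈ Ici a, HasDerivWithinAt x (-∇ (fun x' => L (x', y t)) (x t)) (Ici a) t)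
    (hy : ∀ t ∈ Ici a, HasDerivWithinAt y (∇ (fun y' => L (x t, y')) (y t)) (Ici a) t) :
    ∃ p q, (∀ x' y', L (p, y') ≤ L (p, q) ∧ L (p, q) ≤ L (x', q)) ∧
      Tendsto (fun t => (x t, y t)) atTop (𝓝 (p, q)) := by
  obtain ⟨p, q, hpq, hstrict⟩ := hsol
  replace hpq : IsSaddlePointOn univ univ (curry L) p q := isSaddlePointOn_univ_iff.2 hpq
  have hz := isIntegralCurveOn_gdaField hx hy
  have hLd := hL.differentiable one_ne_zero
  have hball := mapsTo_closedBall_of_isSaddlePointOn hLd hconv hconc hz hpq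
  obtain ⟨w, -, hw⟩ := (isCompact_closedBall _ _).exists_mapClusterPt (f := atTop)
    (tendsto_principal.2 ((eventually_ge_atTop a).mono hball))
  have hsaddle : IsSaddlePointOn univ univ (curry L) w.fst w.snd := hstrict.elim
    (fun hp => isSaddlePointOn_of_mapClusterPt_of_unique_min hL hconv hconc hz hpq hp hw)
    (fun hq => isSaddlePointOn_of_mapClusterPt_of_unique_max hL hconv hconc hz hpq hq hw)
  exact ⟨w.fst, w.snd, isSaddlePointOn_univ_iff.1 hsaddle,
    ((WithLp.prod_continuous_ofLp 2 E F).tendsto w).comp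
      (tendsto_of_isSaddlePointOn_of_mapClusterPt hLd hconv hconc hz hsaddle hw)⟩

/-- **Pointwise convergence of GDA in strictly convex-concave games:** every GDA
trajectory converges to a saddle point of `L`. -/
theorem strict_convex_concave_gda_converges
    {n m : ℕ} (L : EuclideanSpace ℝ (Fin n) × EuclideanSpace ℝ (Fin m) → ℝ)
    (hL : ContDiff ℝ 1 L)
    (hconv : ∀ y, ConvexOn ℝ Set.univ fun x => L (x, y))
    (hconc : ∀ x, ConcaveOn ℝ Set.univ fun y => L (x, y))
    (hstrict : ∀ x y, (StrictConvexOn ℝ Set.univ fun x' => L (x', y)) ∨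
      (StrictConcaveOn ℝ Set.univ fun y' => L (x, y')))
    (hsol : ∃ p q, ∀ x y, L (p, y) ≤ L (p, q) ∧ L (p, q) ≤ L (x, q))
    (x : ℝ → EuclideanSpace ℝ (Fin n)) (y : ℝ → EuclideanSpace ℝ (Fin m))
    (hx : ∀ t : ℝ, 0 ≤ t → HasDerivAt x (-gradient (fun x' => L (x', y t)) (x t)) t)
    (hy : ∀ t : ℝ, 0 ≤ t → HasDerivAt y (gradient (fun y' => L (x t, y')) (y t)) t) :
    ∃ p q, (∀ x' y', L (p, y') ≤ L (p, q) ∧ L (p, q) ≤ L (x', q)) ∧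
      Filter.Tendsto (fun t => (x t, y t)) Filter.atTop (nhds (p, q)) := by
  obtain ⟨p, q, hpq⟩ := hsol
  exact strict_convex_concave_gda_converges_general hL hconv hconc
    ⟨p, q, hpq, (hstrict p q).imp
      (fun h u => lt_of_strictConvexOn_of_isMinOn h
        (isMinOn_univ_iff.2 fun v => (hpq v q).2) (mem_univ p) (mem_univ u))
      (fun h u => lt_of_strictConcaveOn_of_isMaxOn h
        (isMaxOn_univ_iff.2 fun v => (hpq p v).1) (mem_univ q) (mem_univ u))⟩
    (fun t ht => (hx t ht).hasDerivWithinAt) (fun t ht => (hy t ht).hasDerivWithinAt)
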